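/- Every finite solvable group of derived length exactly 5 has composition length at least 7, and there exists a finite solvable group of derived length exactly 5 with composition length equal to 7. -/

import Mathlib

/-!
Write `G⁽ⁱ⁾` for the derived series and `Ω(n)` for the number of prime factors of `n` with
multiplicity.

*Lower bound.* If `K⁽³⁾ = 1` and `K⁽²⁾ ≠ 1`, then `Ω(|K'|) ≥ 3`
(`three_le_cardFactors_derivedSeries_one`). Otherwise `K''` and `K'/K''` both have prime order.
Then `Aut(K'')` is abelian, so `K'` centralizes `K''`, and `K'` is a central extension of a cyclic
group by `K''`, hence abelian, contradicting `K'' ≠ 1`. For `G` of derived length `5`, applying this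
to `G / G⁽³⁾` and to `G⁽²⁾` gives `Ω(|G⁽¹⁾ / G⁽³⁾|) ≥ 3` and `Ω(|G⁽³⁾|) ≥ 3`; as `G ≠ G'`, the total
is at least `1 + 3 + 3 = 7`.

*Sharpness.* The affine group `AGL(2,3) = 𝔽₃² ⋊ GL(2,3)` has order `9 * 48 = 2⁴ * 3³`. Its derived
series runs through `𝔽₃² ⋊ SL(2,3)`, `𝔽₃² ⋊ Q₈`, `𝔽₃² ⋊ {±1}`, `𝔽₃²`, `1`.
-/

/-- `SolvableGroupData G d n` says that `G` is a finite solvable group of derived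
length exactly `d` and composition length (= Ω of its order) equal to `n`. -/
def SolvableGroupData (G : Type*) [Group G] (d n : ℕ) : Prop :=
  Finite G ∧ IsSolvable G ∧ derivedSeries G d = ⊥ ∧ derivedSeries G (d - 1) ≠ ⊥ ∧
    (Nat.card G).primeFactorsList.length = n

open ArithmeticFunction Matrix
open scoped commutatorElement

/-! ### The lower bound -/

/-- A normal cyclic subgroup is centralized by the derived subgroup, because its automorphism group
is abelian. -/
theorem commute_of_mem_commutator_of_isCyclic {K : Type*} [Group K] (N : Subgroup K) [N.Normal]
    [IsCyclic N] {x y : K} (hx : x ∈ commutator K) (hy : y ∈ N) : x * y = y * x := by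
  have h := Abelianization.commutator_subset_ker
    ((IsCyclic.mulAutMulEquiv N).toMonoidHom.comp (MulAut.conjNormal (H := N))) hx
  rw [MonoidHom.mem_ker] at h
  have h1 : MulAut.conjNormal (H := N) x = 1 := by
    apply (IsCyclic.mulAutMulEquiv N).injective
    simpa using h
  have h2 := congrArg (fun f : MulAut N => ((f ⟨y, hy⟩ : N) : K)) h1
  simp only [MulAut.conjNormal_apply, MulAut.one_apply] at h2
  exact mul_inv_eq_iff_eq_mul.mp h2

theorem one_le_cardFactors {n : ℕ} (h0 : n ≠ 0) (h1 : n ≠ 1) : 1 ≤ cardFactors n := by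
  rw [Nat.one_le_iff_ne_zero]
  intro h
  rcases cardFactors_eq_zero_iff_eq_zero_or_one.mp h with h | h <;> contradiction

/-- Two consecutive prime factors just below the top of the derived series are impossible: a finite
group of derived length `3` has a derived subgroup of composition length at least `3`. -/
theorem three_le_cardFactors_derivedSeries_one {K : Type*} [Group K] [Finite K]
    (h3 : derivedSeries K 3 = ⊥) (h2 : derivedSeries K 2 ≠ ⊥) :
    3 ≤ cardFactors (Nat.card (derivedSeries K 1)) := by
  by_contra hlt
  have hle : derivedSeries K 2 ≤ derivedSeries K 1 := derivedSeries_antitone _ (by norm_num)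
  have hcard := ((derivedSeries K 2).subgroupOf (derivedSeries K 1)).card_mul_index
  rw [Nat.card_congr (Subgroup.subgroupOfEquivOfLe hle).toEquiv] at hcard
  have hi0 : ((derivedSeries K 2).subgroupOf (derivedSeries K 1)).index ≠ 0 :=
    Subgroup.index_ne_zero_of_finite
  have hi1 : ((derivedSeries K 2).subgroupOf (derivedSeries K 1)).index ≠ 1 := by
    intro h
    have h12 : derivedSeries K 1 = derivedSeries K 2 :=
      le_antisymm (Subgroup.subgroupOf_eq_top.mp (Subgroup.index_eq_one.mp h)) hle
    apply h2
    rw [← h3, derivedSeries_succ K 2, ← h12]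
    exact h12
  have hc0 : Nat.card (derivedSeries K 2) ≠ 0 := Nat.card_pos.ne'
  have hc1 : Nat.card (derivedSeries K 2) ≠ 1 := fun h => h2 (Subgroup.card_eq_one.mp h)
  rw [← hcard, cardFactors_mul hc0 hi0] at hlt
  have a1 := one_le_cardFactors hc0 hc1
  have a2 := one_le_cardFactors hi0 hi1
  have hp := cardFactors_eq_one_iff_prime.mp (show cardFactors _ = 1 by lia : cardFactors
    (Nat.card (derivedSeries K 2)) = 1)
  have hq := cardFactors_eq_one_iff_prime.mp (show cardFactors _ = 1 by lia : cardFactors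
    ((derivedSeries K 2).subgroupOf (derivedSeries K 1)).index = 1)
  have := Fact.mk hp
  rw [Subgroup.index_eq_card] at hq
  have := Fact.mk hq
  have hcyc : IsCyclic (derivedSeries K 2) := isCyclic_of_prime_card rfl
  have hcyc' : IsCyclic (derivedSeries K 1 ⧸ (derivedSeries K 2).subgroupOf (derivedSeries K 1)) :=
    isCyclic_of_prime_card rfl
  have hcomm := (QuotientGroup.mk'
    ((derivedSeries K 2).subgroupOf (derivedSeries K 1))).isMulCommutative_of_isCyclic_of_ker_le_center
    (by
      rw [QuotientGroup.ker_mk']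
      intro y hy
      rw [Subgroup.mem_center_iff]
      intro x
      exact Subtype.ext (commute_of_mem_commutator_of_isCyclic (derivedSeries K 2) x.2 hy))
  apply h2
  rw [derivedSeries_succ, Subgroup.commutator_eq_bot_iff_le_centralizer]
  intro x hx y hy
  exact congrArg Subtype.val (hcomm.is_comm.comm ⟨y, hy⟩ ⟨x, hx⟩)

theorem map_subtype_derivedSeries {G : Type*} [Group G] (k n : ℕ) :
    (derivedSeries (derivedSeries G k) n).map (derivedSeries G k).subtype =
      derivedSeries G (k + n) := by
  induction n with
  | zero => simp [← MonoidHom.range_eq_map]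
  | succ n ih => rw [derivedSeries_succ, Subgroup.map_commutator, ih]; rfl

theorem seven_le_cardFactors {G : Type*} [Group G] [Finite G]
    (h5 : derivedSeries G 5 = ⊥) (h4 : derivedSeries G 4 ≠ ⊥) :
    7 ≤ cardFactors (Nat.card G) := by
  have hbot : 3 ≤ cardFactors (Nat.card (derivedSeries G 3)) := by
    have e1 := map_subtype_derivedSeries (G := G) 2 1
    have e2 := map_subtype_derivedSeries (G := G) 2 2
    have e3 := map_subtype_derivedSeries (G := G) 2 3
    rw [show 2 + 1 = 3 from rfl] at e1
    rw [← e1, Subgroup.card_subtype]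
    apply three_le_cardFactors_derivedSeries_one
    · rw [show 2 + 3 = 5 from rfl, h5] at e3
      exact (Subgroup.map_eq_bot_iff_of_injective _ (Subgroup.subtype_injective _)).mp e3
    · intro h
      rw [h, Subgroup.map_bot] at e2
      exact h4 e2.symm
  have h43 : derivedSeries G 3 ≠ derivedSeries G 2 := by
    intro h
    have h' : derivedSeries G 4 = derivedSeries G 3 := by
      rw [derivedSeries_succ G 3, h, ← derivedSeries_succ G 2, h]
    apply h4
    rw [← h5, derivedSeries_succ G 4, h', ← derivedSeries_succ G 3, h']
  have hnorm : (derivedSeries G 3).Normal := derivedSeries_normal G 3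
  have hmap := map_derivedSeries_eq (QuotientGroup.mk'_surjective (derivedSeries G 3))
  have htop : 3 ≤ cardFactors (Nat.card (derivedSeries (G ⧸ derivedSeries G 3) 1)) := by
    apply three_le_cardFactors_derivedSeries_one
    · rw [← hmap, Subgroup.map_eq_bot_iff, QuotientGroup.ker_mk']
    · rw [← hmap, Ne, Subgroup.map_eq_bot_iff, QuotientGroup.ker_mk']
      intro h
      exact h43 (le_antisymm (derivedSeries_antitone _ (by norm_num)) h)
  have hfirst : 1 ≤ cardFactors (derivedSeries (G ⧸ derivedSeries G 3) 1).index := by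
    apply one_le_cardFactors Subgroup.index_ne_zero_of_finite
    intro h
    have h1 := Subgroup.index_eq_one.mp h
    -- A perfect group has constant derived series
    have hstep : ∀ n, derivedSeries (G ⧸ derivedSeries G 3) n = ⊤ := by
      intro n
      induction n with
      | zero => rfl
      | succ n ih => rw [derivedSeries_succ (G ⧸ derivedSeries G 3) n, ih]; exact h1
    have h3 := (hstep 3).trans (hstep 2).symm
    rw [← hmap, ← hmap, (Subgroup.map_eq_bot_iff _).mpr (by rw [QuotientGroup.ker_mk']), eq_comm,
      Subgroup.map_eq_bot_iff, QuotientGroup.ker_mk'] at h3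
    exact h43 (le_antisymm (derivedSeries_antitone _ (by norm_num)) h3)
  rw [(derivedSeries G 3).card_eq_card_quotient_mul_card_subgroup,
    cardFactors_mul Nat.card_pos.ne' Nat.card_pos.ne',
    ← (derivedSeries (G ⧸ derivedSeries G 3) 1).card_mul_index,
    cardFactors_mul Nat.card_pos.ne' Subgroup.index_ne_zero_of_finite]
  lia

/-! ### The derived series of `GL(2,3)` -/

/-- The condition on the entries of a `2 × 2` matrix over `𝔽₃` describing `Q₈ ⊆ SL(2,3)`: the
matrix has determinant `1` and is traceless or diagonal, i.e. it has order `4` or is `±1`. -/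
def QuatEntries (a b c d : ZMod 3) : Prop :=
  a * d - b * c = 1 ∧ (a + d = 0 ∨ b = 0 ∧ c = 0)

instance (a b c d : ZMod 3) : Decidable (QuatEntries a b c d) := by
  unfold QuatEntries; infer_instance

theorem quatEntries_mul : ∀ a b c d : ZMod 3, QuatEntries a b c d →
    ∀ e f g h : ZMod 3, QuatEntries e f g h →
      QuatEntries (a * e + b * g) (a * f + b * h) (c * e + d * g) (c * f + d * h) := by
  decide +kernel

theorem quatEntries_inv : ∀ a b c d : ZMod 3, QuatEntries a b c d → QuatEntries d (-b) (-c) a := by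
  decide +kernel

/-- Commutators in `SL(2,3)` lie in `Q₈`. The arguments of `QuatEntries` are the entries of
`x * y * x⁻¹ * y⁻¹`, with inverses written as adjugates. -/
theorem quatEntries_commutator : ∀ a b c d : ZMod 3, a * d - b * c = 1 →
    ∀ e f g h : ZMod 3, e * h - f * g = 1 →
      QuatEntries
        (((a * e + b * g) * d + (a * f + b * h) * -c) * h +
          ((a * e + b * g) * -b + (a * f + b * h) * a) * -g)
        (((a * e + b * g) * d + (a * f + b * h) * -c) * -f +
          ((a * e + b * g) * -b + (a * f + b * h) * a) * e)
        (((c * e + d * g) * d + (c * f + d * h) * -c) * h +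
          ((c * e + d * g) * -b + (c * f + d * h) * a) * -g)
        (((c * e + d * g) * d + (c * f + d * h) * -c) * -f +
          ((c * e + d * g) * -b + (c * f + d * h) * a) * e) := by
  decide +kernel

/-- Two elements of `Q₈` commute up to a scalar factor `u`, which is in fact `±1`. -/
theorem quatEntries_mul_eq_smul_mul : ∀ a b c d : ZMod 3, QuatEntries a b c d →
    ∀ e f g h : ZMod 3, QuatEntries e f g h → ∃ u : ZMod 3,
      a * e + b * g = u * (e * a + f * c) ∧ a * f + b * h = u * (e * b + f * d) ∧
      c * e + d * g = u * (g * a + h * c) ∧ c * f + d * h = u * (g * b + h * d) := by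
  decide +kernel

/-- The inverse of a matrix of determinant `1` is its adjugate. -/
theorem coe_inv_of_det_eq_one (x : GL (Fin 2) (ZMod 3))
    (hx : x 0 0 * x 1 1 - x 0 1 * x 1 0 = 1) :
    ((x⁻¹ : GL (Fin 2) (ZMod 3)) : Matrix (Fin 2) (Fin 2) (ZMod 3)) =
      !![x 1 1, -x 0 1; -x 1 0, x 0 0] := by
  have : (x : Matrix (Fin 2) (Fin 2) (ZMod 3)).det = 1 := by rw [det_fin_two]; exact hx
  rw [coe_units_inv, inv_def, adjugate_fin_two, this]
  simp

/-- The quaternion subgroup `Q₈` of `GL(2,3)`. -/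
def quatSubgroup : Subgroup (GL (Fin 2) (ZMod 3)) where
  carrier := {x | QuatEntries (x 0 0) (x 0 1) (x 1 0) (x 1 1)}
  one_mem' := by
    simp [QuatEntries]
  mul_mem' := by
    intro x y hx hy
    have := quatEntries_mul _ _ _ _ hx _ _ _ _ hy
    simpa [Matrix.mul_apply, Fin.sum_univ_two] using this
  inv_mem' := by
    intro x hx
    have := quatEntries_inv _ _ _ _ hx
    have e := coe_inv_of_det_eq_one x hx.1
    simp only [Set.mem_ofPred_eq, e]
    simpa using this

theorem mem_quatSubgroup {x : GL (Fin 2) (ZMod 3)} :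
    x ∈ quatSubgroup ↔ QuatEntries (x 0 0) (x 0 1) (x 1 0) (x 1 1) := Iff.rfl

theorem det_entries_of_mem_derivedSeries_one {x : GL (Fin 2) (ZMod 3)}
    (hx : x ∈ derivedSeries (GL (Fin 2) (ZMod 3)) 1) :
    x 0 0 * x 1 1 - x 0 1 * x 1 0 = 1 := by
  have h := Abelianization.commutator_subset_ker
    (Matrix.GeneralLinearGroup.det (n := Fin 2) (R := ZMod 3)) hx
  rw [MonoidHom.mem_ker] at h
  have h' := congrArg Units.val h
  rw [GeneralLinearGroup.val_det_apply, det_fin_two] at h'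
  exact h'

theorem derivedSeries_two_le_quatSubgroup :
    derivedSeries (GL (Fin 2) (ZMod 3)) 2 ≤ quatSubgroup := by
  rw [derivedSeries_succ, Subgroup.commutator_le]
  intro x hx y hy
  have hx' := det_entries_of_mem_derivedSeries_one hx
  have hy' := det_entries_of_mem_derivedSeries_one hy
  have := quatEntries_commutator _ _ _ _ hx' _ _ _ _ hy'
  rw [mem_quatSubgroup, commutatorElement_def]
  simp only [Units.val_mul, coe_inv_of_det_eq_one x hx', coe_inv_of_det_eq_one y hy',
    Matrix.mul_apply, Fin.sum_univ_two]
  simpa using this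

theorem derivedSeries_three_le_center :
    derivedSeries (GL (Fin 2) (ZMod 3)) 3 ≤ Subgroup.center _ := by
  rw [derivedSeries_succ, Subgroup.commutator_le]
  intro x hx y hy
  obtain ⟨u, h00, h01, h10, h11⟩ := quatEntries_mul_eq_smul_mul _ _ _ _
    (derivedSeries_two_le_quatSubgroup hx) _ _ _ _ (derivedSeries_two_le_quatSubgroup hy)
  have hxy : ((x * y : GL (Fin 2) (ZMod 3)) : Matrix (Fin 2) (Fin 2) (ZMod 3)) =
      u • ((y * x : GL (Fin 2) (ZMod 3)) : Matrix (Fin 2) (Fin 2) (ZMod 3)) := by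
    ext i j
    fin_cases i <;> fin_cases j <;> simpa [Matrix.mul_apply, Fin.sum_univ_two]
  have hc : ((⁅x, y⁆ : GL (Fin 2) (ZMod 3)) : Matrix (Fin 2) (Fin 2) (ZMod 3)) = u • 1 := by
    have : ⁅x, y⁆ = x * y * (y * x)⁻¹ := by rw [commutatorElement_def]; group
    rw [this, Units.val_mul, hxy, smul_mul_assoc, Units.mul_inv]
  rw [Subgroup.mem_center_iff]
  intro g
  apply Units.ext
  rw [Units.val_mul, Units.val_mul, hc]
  simp

theorem derivedSeries_GL_four : derivedSeries (GL (Fin 2) (ZMod 3)) 4 = ⊥ := by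
  rw [derivedSeries_succ, Subgroup.commutator_eq_bot_iff_le_centralizer]
  exact derivedSeries_three_le_center.trans (Subgroup.center_le_centralizer _)

/-- `-1 ∈ GL(2,3)⁽³⁾`: the reflection `δ = diag(-1, 1)` inverts the transvections `t` and `s`, which
have order `3` and so equal `⁅δ, t⁆` and `⁅δ, s⁆`; and `⁅t, s⁆`, `⁅t, s⁻¹⁆` are anticommuting
elements of `Q₈`. -/
theorem neg_one_mem_derivedSeries_three :
    (-1 : GL (Fin 2) (ZMod 3)) ∈ derivedSeries (GL (Fin 2) (ZMod 3)) 3 := by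
  let δ : GL (Fin 2) (ZMod 3) :=
    ⟨!![-1, 0; 0, 1], !![-1, 0; 0, 1], by decide +kernel, by decide +kernel⟩
  let t : GL (Fin 2) (ZMod 3) :=
    ⟨!![1, 1; 0, 1], !![1, -1; 0, 1], by decide +kernel, by decide +kernel⟩
  let s : GL (Fin 2) (ZMod 3) :=
    ⟨!![1, 0; 1, 1], !![1, 0; -1, 1], by decide +kernel, by decide +kernel⟩
  have ht : t ∈ derivedSeries (GL (Fin 2) (ZMod 3)) 1 := by
    have : t = ⁅δ, t⁆ := by decide +kernel
    rw [this]
    exact Subgroup.commutator_mem_commutator (Subgroup.mem_top _) (Subgroup.mem_top _)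
  have hs : s ∈ derivedSeries (GL (Fin 2) (ZMod 3)) 1 := by
    have : s = ⁅δ, s⁆ := by decide +kernel
    rw [this]
    exact Subgroup.commutator_mem_commutator (Subgroup.mem_top _) (Subgroup.mem_top _)
  have h : (-1 : GL (Fin 2) (ZMod 3)) = ⁅⁅t, s⁆, ⁅t, s⁻¹⁆⁆ := by decide +kernel
  rw [h]
  exact Subgroup.commutator_mem_commutator (Subgroup.commutator_mem_commutator ht hs)
    (Subgroup.commutator_mem_commutator ht (inv_mem hs))

/-! ### The affine group `AGL(2,3)` -/

/-- The natural action of `GL(2,3)` on the additive group of `𝔽₃²`, written multiplicatively. -/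
noncomputable def glAction :
    GL (Fin 2) (ZMod 3) →* MulAut (Multiplicative (Fin 2 → ZMod 3)) :=
  (MulAutMultiplicative (Fin 2 → ZMod 3)).symm.toMonoidHom.comp
    ((DistribMulAction.toAddAut (LinearMap.GeneralLinearGroup (ZMod 3) (Fin 2 → ZMod 3))
      (Fin 2 → ZMod 3)).comp Matrix.GeneralLinearGroup.toLin.toMonoidHom)

/-- The affine group `𝔽₃² ⋊ GL(2,3)`. -/
abbrev AffineGroupF3 : Type := Multiplicative (Fin 2 → ZMod 3) ⋊[glAction] GL (Fin 2) (ZMod 3)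

theorem glAction_neg_one (v : Multiplicative (Fin 2 → ZMod 3)) : glAction (-1) v = v⁻¹ := by
  have : glAction (-1) v = Multiplicative.ofAdd
      ((-1 : Matrix (Fin 2) (Fin 2) (ZMod 3)) *ᵥ v.toAdd) := rfl
  rw [this, neg_mulVec, one_mulVec]
  rfl

theorem card_affineGroupF3 : Nat.card AffineGroupF3 = 432 := by
  rw [SemidirectProduct.card, Matrix.card_GL_field]
  simp [Fin.prod_univ_two, ZMod.card]

theorem derivedSeries_affineGroupF3_five : derivedSeries AffineGroupF3 5 = ⊥ := by
  have hker : derivedSeries AffineGroupF3 4 ≤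
      (SemidirectProduct.inl (φ := glAction)).range := by
    rw [SemidirectProduct.range_inl_eq_ker_rightHom, ← Subgroup.map_eq_bot_iff,
      map_derivedSeries_eq SemidirectProduct.rightHom_surjective, derivedSeries_GL_four]
  rw [derivedSeries_succ, Subgroup.commutator_eq_bot_iff_le_centralizer]
  intro x hx y hy
  obtain ⟨a, rfl⟩ := hker hx
  obtain ⟨b, rfl⟩ := hker hy
  rw [← map_mul, ← map_mul, mul_comm]

/-- Every translation `v` is the commutator `⁅-1, v⁆`, since `-2 = 1` in `𝔽₃`. As `-1` lies in the
first three derived subgroups, translations survive up to the fourth. -/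
theorem inl_mem_derivedSeries (v : Multiplicative (Fin 2 → ZMod 3)) (k : ℕ) (hk : k ≤ 4) :
    (SemidirectProduct.inl v : AffineGroupF3) ∈ derivedSeries AffineGroupF3 k := by
  induction k with
  | zero => exact Subgroup.mem_top _
  | succ k ih =>
    have hz : (SemidirectProduct.inr (-1) : AffineGroupF3) ∈ derivedSeries AffineGroupF3 k :=
      derivedSeries_antitone _ (show k ≤ 3 by lia)
        (map_derivedSeries_le_derivedSeries _ 3
          (Subgroup.mem_map_of_mem _ neg_one_mem_derivedSeries_three))
    have hv : (SemidirectProduct.inl v : AffineGroupF3) =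
        ⁅(SemidirectProduct.inr (-1) : AffineGroupF3), SemidirectProduct.inl v⁆ := by
      rw [commutatorElement_def, ← map_inv SemidirectProduct.inr, ← SemidirectProduct.inl_aut,
        glAction_neg_one, ← map_inv, ← map_mul]
      congr 1
      have h3 : ∀ w : Fin 2 → ZMod 3, w = -w + -w := by decide +kernel
      exact h3 v
    rw [hv]
    exact Subgroup.commutator_mem_commutator hz (ih (by lia))

theorem derivedSeries_affineGroupF3_four : derivedSeries AffineGroupF3 4 ≠ ⊥ := by
  intro h
  have h1 := inl_mem_derivedSeries (Multiplicative.ofAdd fun _ => 1) 4 le_rfl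
  rw [h, Subgroup.mem_bot, ← map_one SemidirectProduct.inl] at h1
  have h2 : (1 : ZMod 3) = 0 :=
    congrFun (congrArg Multiplicative.toAdd (SemidirectProduct.inl_injective h1)) 0
  exact absurd h2 (by decide +kernel)

/-- Every finite solvable group of derived length exactly 5 has composition length
at least 7, and this bound is attained. -/
theorem cS_five_eq_seven :
    (∀ (G : Type u) (inst : Group G) (m : ℕ), @SolvableGroupData G inst 5 m → 7 ≤ m) ∧
    (∃ (G : Type) (inst : Group G), @SolvableGroupData G inst 5 7) := by
  constructor
  · rintro G inst m ⟨hfin, -, h5, h4, rfl⟩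
    exact seven_le_cardFactors h5 h4
  · refine ⟨AffineGroupF3, inferInstance, Nat.finite_of_card_ne_zero ?_,
      ⟨5, derivedSeries_affineGroupF3_five⟩, derivedSeries_affineGroupF3_five,
      derivedSeries_affineGroupF3_four, ?_⟩
    · rw [card_affineGroupF3]; norm_num
    · rw [card_affineGroupF3]
      simp
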